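/- Let ψ be a continuous positive definite function on the d-torus T^d with Fourier representation ψ(x) = ∑_{n∈ℤ^d} A_ψ(n) e^{i xᵀn}, where A_ψ(n) ≥ 0, A_ψ(−n) = A_ψ(n) and ∑_{n∈ℤ^d} A_ψ(n) < ∞, and let k(x,y) = ψ((x − y) mod 2π). If k is characteristic to the set of all Borel probability measures on T^d and A_ψ(0) > 0, then k is c-universal. -/

import Mathlib

open MeasureTheory Filter Topology RealInnerProductSpace

/-- The character `x ↦ e^{i xᵀn}` on the `d`-torus `(ℝ/2πℤ)^d`, for a frequency
`n ∈ ℤ^d`; here `AddCircle.toCircle θ = e^{iθ}` on `ℝ/2πℤ`. -/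
noncomputable def torusChar {d : ℕ} (n : Fin d → ℤ)
    (x : Fin d → AddCircle (2 * Real.pi)) : ℂ :=
  ∏ j, (AddCircle.toCircle (x j) : ℂ) ^ (n j)

/-!
A continuous functional on `C(X)` is integration against a difference `μ - ν` of finite measures,
by splitting it into positive parts and applying Riesz–Markov–Kakutani. If it vanishes on the RKHS,
then `μ` and `ν` have the same mean embedding; if it also vanishes on `1`, they have the same mass,
so a characteristic kernel forces `μ = ν`. By Hahn–Banach, a characteristic kernel whose RKHS has
`1` in its closure is therefore universal. For a translation invariant kernel the mean embedding of
Haar measure is the constant `∫ ψ`, which on the torus is `A_ψ(0)`.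
-/

lemma dense_of_forall_dual_eq_zero {𝕜 E : Type*} [RCLike 𝕜] [NormedAddCommGroup E]
    [NormedSpace 𝕜 E] {p : Submodule 𝕜 E}
    (hp : ∀ L : StrongDual 𝕜 E, (∀ f ∈ p, L f = 0) → L = 0) : Dense (p : Set E) := by
  rw [Submodule.dense_iff_topologicalClosure_eq_top, Submodule.eq_top_iff']
  intro f
  have : IsClosed (p.topologicalClosure : Set E) := p.isClosed_topologicalClosure
  rw [← Submodule.Quotient.mk_eq_zero]
  refine SeparatingDual.eq_zero_of_forall_dual_eq_zero (R := 𝕜) fun L ↦ ?_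
  have hL : L.comp p.topologicalClosure.mkQL = 0 := hp _ fun g hg ↦ by
    simp [(Submodule.Quotient.mk_eq_zero _).mpr (p.le_topologicalClosure hg)]
  exact congr($hL f)

lemma smul_posPart {E : Type*} [AddCommGroup E] [Module ℝ E] [Lattice E] [PosSMulMono ℝ E]
    {c : ℝ} (hc : 0 < c) (f : E) : (c • f)⁺ = c • f⁺ := by
  calc (c • f)⁺ = c • f ⊔ c • 0 := by rw [smul_zero]; rfl
    _ = c • f⁺ := ((OrderIso.smulRight hc).map_sup f 0).symm

lemma norm_posPart_add_le {E : Type*} [NormedAddCommGroup E] [Lattice E] [IsOrderedAddMonoid E]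
    [HasSolidNorm E] (f g : E) : ‖(f + g)⁺‖ ≤ ‖f⁺‖ + ‖g⁺‖ := by
  have h : (f + g)⁺ ≤ f⁺ + g⁺ :=
    sup_le (add_le_add (le_posPart f) (le_posPart g))
      (add_nonneg (posPart_nonneg f) (posPart_nonneg g))
  refine (HasSolidNorm.solid ?_).trans (norm_add_le _ _)
  exact abs_le_abs_of_nonneg (posPart_nonneg _) h

theorem exists_eq_positive_sub_positive {E : Type*} [NormedAddCommGroup E] [NormedSpace ℝ E]
    [Lattice E] [IsOrderedAddMonoid E] [PosSMulMono ℝ E] [HasSolidNorm E] (L : StrongDual ℝ E) :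
    ∃ P Q : E →ₚ[ℝ] ℝ, ∀ f, L f = P f - Q f := by
  -- `N` dominates `L` on the antidiagonal and vanishes on the negative cone of `E × E`, so the
  -- Hahn–Banach extension of `L` is positive.
  let antidiag : E × E →ₗ.[ℝ] ℝ :=
    { domain := (-LinearMap.id : E →ₗ[ℝ] E).graph
      toFun := L.toLinearMap ∘ₗ LinearMap.fst ℝ E E ∘ₗ Submodule.subtype _ }
  let N : E × E → ℝ := fun p ↦ ‖L‖ * (‖p.1⁺‖ + ‖p.2⁺‖)
  have hle : ∀ p : antidiag.domain, antidiag p ≤ N p := by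
    rintro ⟨⟨f, g⟩, hfg⟩
    obtain rfl : g = -f := hfg
    calc L f ≤ ‖L‖ * ‖f‖ := (le_abs_self _).trans (L.le_opNorm f)
      _ = ‖L‖ * ‖f⁺ - f⁻‖ := by rw [posPart_sub_negPart]
      _ ≤ ‖L‖ * (‖f⁺‖ + ‖f⁻‖) := by gcongr; exact norm_sub_le _ _
      _ = N (f, -f) := by simp only [N, posPart_neg]
  obtain ⟨Λ, hΛ, hΛN⟩ := exists_extension_of_le_sublinear antidiag N
    (fun c hc p ↦ by
      simp only [N, Prod.smul_fst, Prod.smul_snd, smul_posPart hc, norm_smul,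
        Real.norm_of_nonneg hc.le]
      ring)
    (fun p q ↦ by
      calc N (p + q) ≤ ‖L‖ * (‖p.1⁺‖ + ‖q.1⁺‖ + (‖p.2⁺‖ + ‖q.2⁺‖)) :=
            mul_le_mul_of_nonneg_left (add_le_add (norm_posPart_add_le _ _)
              (norm_posPart_add_le _ _)) (norm_nonneg L)
        _ = N p + N q := by ring)
    hle
  have hpos : ∀ p : E × E, 0 ≤ p → 0 ≤ Λ p := fun p hp ↦ by
    have hN : N (-p) = 0 := by
      simp [N, negPart_eq_zero.mpr hp.1, negPart_eq_zero.mpr hp.2]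
    simpa [hN] using hΛN (-p)
  refine ⟨.mk₀ (Λ ∘ₗ LinearMap.inl ℝ E E) fun f hf ↦ hpos _ ⟨hf, le_rfl⟩,
    .mk₀ (Λ ∘ₗ LinearMap.inr ℝ E E) fun f hf ↦ hpos _ ⟨le_rfl, hf⟩, fun f ↦ ?_⟩
  calc L f = Λ (f, -f) := (hΛ ⟨(f, -f), rfl⟩).symm
    _ = Λ ((f, 0) - (0, f)) := by simp
    _ = Λ (f, 0) - Λ (0, f) := map_sub Λ _ _

section Riesz

variable {X : Type*} [TopologicalSpace X] [CompactSpace X]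

local instance hasSolidNorm_continuousMap : HasSolidNorm C(X, ℝ) where
  solid f g hfg := (ContinuousMap.norm_le f (norm_nonneg g)).mpr fun x ↦
    (show |f x| ≤ |g x| by simpa using hfg x).trans (g.norm_coe_le_norm x)

variable [T2Space X] [MeasurableSpace X] [BorelSpace X]

lemma exists_isFiniteMeasure_integral_eq (P : C(X, ℝ) →ₚ[ℝ] ℝ) :
    ∃ μ : Measure X, IsFiniteMeasure μ ∧ ∀ f, P f = ∫ x, f x ∂μ := by
  let Λ : CompactlySupportedContinuousMap X ℝ →ₚ[ℝ] ℝ :=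
    { toFun f := P f
      map_add' f g := map_add P (f : C(X, ℝ)) g
      map_smul' c f := map_smul P c (f : C(X, ℝ))
      monotone' f g hfg := P.monotone' hfg }
  exact ⟨RealRMK.rieszMeasure Λ, inferInstance, fun f ↦
    (RealRMK.integral_rieszMeasure Λ (CompactlySupportedContinuousMap.continuousMapEquiv f)).symm⟩

theorem exists_isFiniteMeasure_integral_sub_integral_eq (L : StrongDual ℝ C(X, ℝ)) :
    ∃ μ ν : Measure X, IsFiniteMeasure μ ∧ IsFiniteMeasure ν ∧
      ∀ f, L f = ∫ x, f x ∂μ - ∫ x, f x ∂ν := by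
  obtain ⟨P, Q, hL⟩ := exists_eq_positive_sub_positive L
  obtain ⟨μ, hμ, hP⟩ := exists_isFiniteMeasure_integral_eq P
  obtain ⟨ν, hν, hQ⟩ := exists_isFiniteMeasure_integral_eq Q
  exact ⟨μ, ν, hμ, hν, fun f ↦ by rw [hL, hP, hQ]⟩

end Riesz

section Embedding

lemma continuous_of_continuous_inner {X H : Type*} [TopologicalSpace X] [NormedAddCommGroup H]
    [InnerProductSpace ℝ H] {Φ : X → H} (hΦ : Continuous fun p : X × X ↦ ⟪Φ p.1, Φ p.2⟫) :
    Continuous Φ := by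
  refine continuous_iff_continuousAt.mpr fun x ↦ tendsto_iff_norm_sub_tendsto_zero.mpr ?_
  have hnorm : ∀ y, ‖Φ y - Φ x‖ = √(⟪Φ y, Φ y⟫ - 2 * ⟪Φ y, Φ x⟫ + ⟪Φ x, Φ x⟫) := fun y ↦ by
    rw [real_inner_self_eq_norm_sq, real_inner_self_eq_norm_sq, ← norm_sub_sq_real,
      Real.sqrt_sq (norm_nonneg _)]
  have hdiag : Continuous fun y ↦ ⟪Φ y, Φ y⟫ := hΦ.comp (continuous_id.prodMk continuous_id)
  have hsect : Continuous fun y ↦ ⟪Φ y, Φ x⟫ := hΦ.comp (.prodMk_left x)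
  have hcont : Continuous fun y ↦ √(⟪Φ y, Φ y⟫ - 2 * ⟪Φ y, Φ x⟫ + ⟪Φ x, Φ x⟫) := by fun_prop
  simpa [hnorm, two_mul] using hcont.tendsto x

variable {X H : Type*} [MeasurableSpace X] [NormedAddCommGroup H]

/-- The kernel `⟪Φ x, Φ y⟫` with feature map `Φ` is characteristic: the mean embedding
`P ↦ ∫ x, Φ x ∂P` is injective on probability measures. -/
def IsCharacteristicFeatureMap [NormedSpace ℝ H] (Φ : X → H) : Prop :=
  ∀ P Q : Measure X, IsProbabilityMeasure P → IsProbabilityMeasure Q →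
    (∫ x, Φ x ∂P) = (∫ x, Φ x ∂Q) → P = Q

lemma IsCharacteristicFeatureMap.eq_of_integral_eq [NormedSpace ℝ H] {Φ : X → H}
    (hΦ : IsCharacteristicFeatureMap Φ) {μ ν : Measure X} [IsFiniteMeasure μ]
    (hmass : μ Set.univ = ν Set.univ) (hint : ∫ x, Φ x ∂μ = ∫ x, Φ x ∂ν) : μ = ν := by
  rcases eq_or_ne (μ Set.univ) 0 with hμ | hμ
  · rw [Measure.measure_univ_eq_zero.mp hμ, Measure.measure_univ_eq_zero.mp (hmass.symm.trans hμ)]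
  have hμ' : (μ Set.univ)⁻¹ ≠ 0 := ENNReal.inv_ne_zero.mpr (measure_ne_top μ _)
  have hP : IsProbabilityMeasure ((μ Set.univ)⁻¹ • μ) :=
    ⟨by simpa using ENNReal.inv_mul_cancel hμ (measure_ne_top μ _)⟩
  have hQ : IsProbabilityMeasure ((μ Set.univ)⁻¹ • ν) :=
    ⟨by simpa [← hmass] using ENNReal.inv_mul_cancel hμ (measure_ne_top μ _)⟩
  have heq := hΦ _ _ hP hQ (by rw [integral_smul_measure, integral_smul_measure, hint])
  ext s
  have hs := congr($heq s)
  simpa [ENNReal.mul_right_inj, hμ, hμ'] using hs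

end Embedding

section Universal

variable {X H : Type*} [TopologicalSpace X] [NormedAddCommGroup H]

lemma integrable_of_continuous_of_compactSpace [CompactSpace X] [MeasurableSpace X]
    [OpensMeasurableSpace X] {Φ : X → H} (hΦ : Continuous Φ) (μ : Measure X)
    [IsFiniteMeasure μ] : Integrable Φ μ :=
  hΦ.integrable_of_hasCompactSupport (.of_compactSpace Φ)

variable [InnerProductSpace ℝ H]

/-- The vector `f` of an RKHS with continuous feature map `Φ`, read as the function
`x ↦ ⟪f, Φ x⟫`. The kernel is c-universal when this map has dense range. -/
def rkhsToContinuousMap (Φ : C(X, H)) : H →ₗ[ℝ] C(X, ℝ) where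
  toFun f := ⟨fun x ↦ ⟪f, Φ x⟫, by fun_prop⟩
  map_add' f g := by ext x; exact inner_add_left f g (Φ x)
  map_smul' c f := by ext x; exact real_inner_smul_left f (Φ x) c

variable [CompactSpace X] [T2Space X] [MeasurableSpace X] [BorelSpace X] [CompleteSpace H]

theorem IsCharacteristicFeatureMap.denseRange_rkhsToContinuousMap {Φ : C(X, H)}
    (hΦ : IsCharacteristicFeatureMap Φ)
    (hone : 1 ∈ closure (Set.range (rkhsToContinuousMap Φ))) :
    DenseRange (rkhsToContinuousMap Φ) := by
  refine dense_of_forall_dual_eq_zero (p := (rkhsToContinuousMap Φ).range) (𝕜 := ℝ) fun L hL ↦ ?_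
  obtain ⟨μ, ν, hμ, hν, hLμν⟩ := exists_isFiniteMeasure_integral_sub_integral_eq L
  have hinner : ∀ (ρ : Measure X) [IsFiniteMeasure ρ] (f : H),
      ∫ x, rkhsToContinuousMap Φ f x ∂ρ = ⟪f, ∫ x, Φ x ∂ρ⟫ := fun ρ _ f ↦
    integral_inner (integrable_of_continuous_of_compactSpace Φ.continuous ρ) f
  have hembed : ∫ x, Φ x ∂μ = ∫ x, Φ x ∂ν := ext_inner_left ℝ fun f ↦ by
    rw [← hinner μ, ← hinner ν, ← sub_eq_zero, ← hLμν]
    exact hL _ ⟨f, rfl⟩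
  have hL1 : L 1 = 0 := closure_minimal hL (isClosed_singleton.preimage L.continuous) hone
  have hmass : μ Set.univ = ν Set.univ := by
    rw [hLμν, sub_eq_zero] at hL1
    simpa [measureReal_def, ENNReal.toReal_eq_toReal_iff'] using hL1
  ext f
  simp [hLμν, hΦ.eq_of_integral_eq hmass hembed]

end Universal

theorem stmt15_general {G : Type*} [AddGroup G] [TopologicalSpace G] [IsTopologicalAddGroup G]
    [CompactSpace G] [T2Space G] [MeasurableSpace G] [BorelSpace G]
    {H : Type*} [NormedAddCommGroup H] [InnerProductSpace ℝ H] [CompleteSpace H]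
    (μ : Measure G) [IsFiniteMeasure μ] [μ.IsAddRightInvariant]
    {ψ : G → ℝ} (hψ : Continuous ψ)
    {Φ : G → H} (hΦψ : ∀ x y, ⟪Φ x, Φ y⟫ = ψ (x - y)) (hchar : IsCharacteristicFeatureMap Φ)
    (hμψ : ∫ x, ψ x ∂μ ≠ 0) (g : C(G, ℝ)) (ε : ℝ) (hε : 0 < ε) :
    ∃ f : H, ∀ x, |⟪f, Φ x⟫ - g x| ≤ ε := by
  have hΦ : Continuous Φ := continuous_of_continuous_inner (by simpa only [hΦψ] using by fun_prop)
  have hconst : ∀ x, ⟪∫ y, Φ y ∂μ, Φ x⟫ = ∫ y, ψ y ∂μ := fun x ↦ by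
    calc ⟪∫ y, Φ y ∂μ, Φ x⟫ = ∫ y, ⟪Φ x, Φ y⟫ ∂μ := by
          rw [real_inner_comm, integral_inner (integrable_of_continuous_of_compactSpace hΦ μ)]
      _ = ∫ y, ψ (y - x) ∂μ := by simp only [real_inner_comm (Φ _) (Φ x), hΦψ]
      _ = ∫ y, ψ y ∂μ := integral_sub_right_eq_self ψ x
  have hone : 1 ∈ Set.range (rkhsToContinuousMap ⟨Φ, hΦ⟩) :=
    ⟨(∫ y, ψ y ∂μ)⁻¹ • ∫ y, Φ y ∂μ, ContinuousMap.ext fun x ↦ by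
      simp [rkhsToContinuousMap, hconst, hμψ]⟩
  have hdense : DenseRange (rkhsToContinuousMap ⟨Φ, hΦ⟩) :=
    hchar.denseRange_rkhsToContinuousMap (Φ := ⟨Φ, hΦ⟩) (subset_closure hone)
  obtain ⟨f, hf⟩ := hdense.exists_dist_lt g hε
  refine ⟨f, fun x ↦ ?_⟩
  rw [← Real.dist_eq, dist_comm]
  exact (ContinuousMap.dist_apply_le_dist x).trans hf.le

local instance fact_two_pi_pos : Fact (0 < 2 * Real.pi) := ⟨Real.two_pi_pos⟩

lemma integral_fourier_of_ne_zero {T : ℝ} [hT : Fact (0 < T)] {n : ℤ} (hn : n ≠ 0) :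
    ∫ x : AddCircle T, fourier n x ∂AddCircle.haarAddCircle = 0 :=
  integral_eq_zero_of_add_right_eq_neg (fourier_add_half_inv_index hn hT.out)

section Torus

variable {d : ℕ}

lemma torusChar_eq_prod_fourier (n : Fin d → ℤ) (x : Fin d → AddCircle (2 * Real.pi)) :
    torusChar n x = ∏ j, fourier (n j) (x j) := by
  simp [torusChar, fourier_apply, AddCircle.toCircle_zsmul]

lemma continuous_torusChar (n : Fin d → ℤ) : Continuous (torusChar n) := by
  simp only [funext (torusChar_eq_prod_fourier n)]
  fun_prop

lemma norm_torusChar (n : Fin d → ℤ) (x : Fin d → AddCircle (2 * Real.pi)) :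
    ‖torusChar n x‖ = 1 := by
  rw [torusChar, norm_prod]
  exact Finset.prod_eq_one fun j _ ↦ by rw [norm_zpow, Circle.norm_coe, one_zpow]

lemma integral_torusChar (n : Fin d → ℤ) :
    ∫ x, torusChar n x ∂(Measure.pi fun _ ↦ AddCircle.haarAddCircle) = if n = 0 then 1 else 0 := by
  split_ifs with hn
  · simp [hn, torusChar]
  · obtain ⟨j, hj⟩ := Function.ne_iff.mp hn
    simp only [torusChar_eq_prod_fourier]
    rw [integral_fintype_prod_eq_prod fun j x ↦ fourier (n j) x]
    exact Finset.prod_eq_zero (Finset.mem_univ j) (integral_fourier_of_ne_zero hj)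

theorem integral_tsum_mul_torusChar {a : (Fin d → ℤ) → ℂ} (ha : Summable a) :
    ∫ x, ∑' n, a n * torusChar n x ∂(Measure.pi fun _ ↦ AddCircle.haarAddCircle) = a 0 := by
  rw [← integral_tsum_of_summable_integral_norm]
  · simp only [integral_const_mul, integral_torusChar, mul_ite, mul_one, mul_zero, tsum_ite_eq]
  · exact fun n ↦ integrable_of_continuous_of_compactSpace
      (continuous_const.mul (continuous_torusChar n)) _
  · simpa [norm_torusChar] using ha.norm

lemma integral_eq_coeff_zero {ψ : (Fin d → AddCircle (2 * Real.pi)) → ℝ} {A : (Fin d → ℤ) → ℝ}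
    (hA : Summable A) (hψ : ∀ x, (ψ x : ℂ) = ∑' n, (A n : ℂ) * torusChar n x) :
    ∫ x, ψ x ∂(Measure.pi fun _ ↦ AddCircle.haarAddCircle) = A 0 := by
  have hA' : Summable fun n ↦ (A n : ℂ) := Complex.summable_ofReal.mpr hA
  apply Complex.ofReal_injective
  rw [← integral_complex_ofReal]
  simp only [hψ, integral_tsum_mul_torusChar hA']

end Torus

/-- Let `ψ` be a continuous positive definite function on the `d`-torus
with Fourier representation `ψ(x) = ∑_{n∈ℤ^d} A_ψ(n) e^{i xᵀn}` (`A_ψ(n) ≥ 0`,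
`A_ψ(−n) = A_ψ(n)`, `∑ A_ψ(n) < ∞`), and let `k(x,y) = ψ(x−y)` with RKHS `H`.  If `k` is
characteristic to the set of all Borel probability measures on the torus and
`A_ψ(0) > 0`, then `k` is c-universal. -/
theorem stmt15 {d : ℕ}
    (ψ : (Fin d → AddCircle (2 * Real.pi)) → ℝ) (hψcont : Continuous ψ)
    (A : (Fin d → ℤ) → ℝ)
    (hA0 : ∀ n, 0 ≤ A n) (hAsymm : ∀ n, A (-n) = A n) (hAsum : Summable A)
    (hψA : ∀ x, (ψ x : ℂ) = ∑' n : Fin d → ℤ, (A n : ℂ) * torusChar n x)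
    (k : (Fin d → AddCircle (2 * Real.pi)) → (Fin d → AddCircle (2 * Real.pi)) → ℝ)
    (hkψ : ∀ x y, k x y = ψ (x - y))
    {H : Type*} [NormedAddCommGroup H] [InnerProductSpace ℝ H] [CompleteSpace H]
    (T : H →ₗ[ℝ] ((Fin d → AddCircle (2 * Real.pi)) → ℝ)) (hT : Function.Injective T)
    (Φ : (Fin d → AddCircle (2 * Real.pi)) → H)
    (hk : ∀ x y, k x y = ⟪Φ x, Φ y⟫)
    (hrepro : ∀ (f : H) x, T f x = ⟪f, Φ x⟫)
    (hchar : ∀ P Q : Measure (Fin d → AddCircle (2 * Real.pi)),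
      IsProbabilityMeasure P → IsProbabilityMeasure Q →
      (∫ x, Φ x ∂P) = (∫ x, Φ x ∂Q) → P = Q)
    (hA0pos : 0 < A 0) :
    ∀ (g : C((Fin d → AddCircle (2 * Real.pi)), ℝ)) (ε : ℝ), 0 < ε →
      ∃ f : H, ∀ x, |T f x - g x| ≤ ε := by
  intro g ε hε
  have hmean : ∫ x, ψ x ∂(Measure.pi fun _ ↦ AddCircle.haarAddCircle) ≠ 0 :=
    (integral_eq_coeff_zero hAsum hψA).trans_ne hA0pos.ne'
  simpa only [hrepro] using
    stmt15_general _ hψcont (fun x y ↦ by rw [← hk, hkψ]) hchar hmean g ε hε
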